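/- Let (Q, 𝔫, k) be a commutative Noetherian local ring and I ⊆ Q a grade 3 perfect ideal of resolution format (1, m, m+n−1, n). If m ≥ 4 and n ≥ 2, then there exists a grade 3 perfect ideal of resolution format (1, m+1, m+n, n) that is linked to I. -/

import Mathlib

/-- An ideal `I` in a commutative Noetherian local ring `Q` has **resolution format**
`(1, m, m+n-1, n)` if the minimal free resolution of `Q/I` over `Q` is
`0 → Q^n → Q^{m+n-1} → Q^m → Q`, i.e. there is an exact complex of free modules of the
indicated ranks augmented by `Q → Q/I → 0`, which is minimal in the sense that each
differential maps into `𝔫` times the target (`𝔫` the maximal ideal).  Equivalently, the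
`i`-th entry of the format is the Betti number `dim_k Tor_i^Q(Q/I, k)`. -/
def HasResolutionFormat {Q : Type*} [CommRing Q] [IsLocalRing Q]
    (I : Ideal Q) (m n : ℕ) : Prop :=
  ∃ (d1 : (Fin m → Q) →ₗ[Q] Q)
    (d2 : (Fin (m + n - 1) → Q) →ₗ[Q] (Fin m → Q))
    (d3 : (Fin n → Q) →ₗ[Q] (Fin (m + n - 1) → Q)),
    LinearMap.range d1 = I ∧
    LinearMap.range d2 = LinearMap.ker d1 ∧
    LinearMap.range d3 = LinearMap.ker d2 ∧
    LinearMap.ker d3 = ⊥ ∧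
    I ≤ IsLocalRing.maximalIdeal Q ∧
    LinearMap.range d2 ≤ (IsLocalRing.maximalIdeal Q) • (⊤ : Submodule Q (Fin m → Q)) ∧
    LinearMap.range d3 ≤ (IsLocalRing.maximalIdeal Q) • (⊤ : Submodule Q (Fin (m + n - 1) → Q))

/-- `I` is a grade `3` perfect ideal of resolution format `(1, m, m+n-1, n)`:
`I` contains a `Q`-regular sequence of length `3`, one has `m ≥ 3` and `n ≥ 1`, and the
minimal free resolution of `Q/I` has the format `(1, m, m+n-1, n)` (in particular `Q/I`
has projective dimension `3` as a `Q`-module, since `n ≥ 1`). -/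
def IsGrade3PerfectOfFormat {Q : Type*} [CommRing Q] [IsLocalRing Q]
    (I : Ideal Q) (m n : ℕ) : Prop :=
  (∃ x y z : Q, x ∈ I ∧ y ∈ I ∧ z ∈ I ∧ RingTheory.Sequence.IsRegular Q [x, y, z]) ∧
  3 ≤ m ∧ 1 ≤ n ∧ HasResolutionFormat I m n

/-- `J` is **directly linked** to `I` if there is a `Q`-regular sequence `x₁, x₂, x₃` of
elements of `I` with `J = (x₁, x₂, x₃) : I`. -/
def DirectlyLinked {Q : Type*} [CommRing Q] (I J : Ideal Q) : Prop :=
  ∃ x y z : Q, x ∈ I ∧ y ∈ I ∧ z ∈ I ∧ RingTheory.Sequence.IsRegular Q [x, y, z] ∧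
    J = Submodule.colon (Ideal.span {x, y, z}) I

/-- `J` is **linked** to `I` if there is a finite chain of ideals
`I = J₀, J₁, …, J_r = J` in which `J_{i+1}` is directly linked to `J_i` for every `i`. -/
def Linked {Q : Type*} [CommRing Q] (I J : Ideal Q) : Prop :=
  Relation.ReflTransGen (fun A B => DirectlyLinked A B) I J

/-- `I` is **licci** if it is linked to an ideal generated by a `Q`-regular sequence of
length `3`, i.e. `I` is in the linkage class of a complete intersection ideal. -/
def Licci {Q : Type*} [CommRing Q] (I : Ideal Q) : Prop :=
  ∃ C : Ideal Q, Linked I C ∧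
    ∃ x y z : Q, RingTheory.Sequence.IsRegular Q [x, y, z] ∧ C = Ideal.span {x, y, z}

/-!
Choose a bilinear multiplication satisfying the Leibniz rule on the minimal free resolution `F` of
`Q ⧸ I`, a split surjection `ε : F₃ → Q`, and elements `u, v, z` of `F₁` whose images under `d₁`
form a regular sequence. Multiplication by `u * v` followed by `ε` gives a morphism of complexes
from `F` to the Koszul complex `K` of `a₁ = d₁ u`, `a₂ = (d₁ v)²`. If `φ : F₁ → Q` is its
component in degree one, then `d₁ x * φ y ≡ d₁ y * φ x` modulo `(a₁, a₂)`, and therefore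
`J = (a₁, a₂) + φ(F₁)` is linked to `I` in two steps: with `L = (a₁, a₂, d₁ z) : I`, one has
`J = (a₁, a₂, φ z) : L`.

The iterated mapping cone of `K → F → K` resolves `Q ⧸ J`. Two rank-one summands cancel against
units, one at `ε` and one at the generator `u`, which leaves the ranks `1, m + 1, m + n, n`. The
remaining complex is minimal as soon as `u` is part of a basis and `ε (u * F₂) ⊆ 𝔫`, and for
`n ≥ 2` such a `u` exists: otherwise the pairing `ε (· * ·)` of `F₁` with `F₂` would map `F₂` onto
the dual of `F₁`, which forces `F₃` to have rank one.
-/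

open IsLocalRing RingTheory.Sequence

section RegularSequences

variable {R M : Type*} [CommRing R] [AddCommGroup M] [Module R M] {a b c : R}

theorem mem_span_pair_smul_top {x : M} :
    x ∈ Ideal.span {a, b} • (⊤ : Submodule R M) ↔ ∃ y z, x = a • y + b • z := by
  rw [Ideal.span_insert, Submodule.sup_smul, Submodule.ideal_span_singleton_smul,
    Submodule.ideal_span_singleton_smul]
  simp only [Submodule.mem_sup, Submodule.mem_smul_pointwise_iff_exists, Submodule.mem_top,
    true_and]
  grind

theorem mem_span_triple_smul_top {x : M} :
    x ∈ Ideal.span {a, b, c} • (⊤ : Submodule R M) ↔ ∃ y z w, x = a • y + b • z + c • w := by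
  rw [Ideal.span_insert, Submodule.sup_smul, Submodule.ideal_span_singleton_smul,
    Submodule.mem_sup]
  simp only [mem_span_pair_smul_top, Submodule.mem_smul_pointwise_iff_exists, Submodule.mem_top,
    true_and]
  constructor
  · rintro ⟨-, ⟨y, rfl⟩, -, ⟨z, w, rfl⟩, rfl⟩
    exact ⟨y, z, w, (add_assoc _ _ _).symm⟩
  · rintro ⟨y, z, w, rfl⟩
    exact ⟨_, ⟨y, rfl⟩, _, ⟨z, w, rfl⟩, (add_assoc _ _ _).symm⟩

theorem isWeaklyRegular_pair_iff :
    IsWeaklyRegular M [a, b] ↔ IsSMulRegular M a ∧ ∀ x y : M, b • x = a • y → ∃ z, x = a • z := by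
  rw [show [a, b] = [a] ++ [b] from rfl, isWeaklyRegular_append_iff, isWeaklyRegular_singleton_iff,
    isWeaklyRegular_singleton_iff, isSMulRegular_quotient_iff_mem_of_smul_mem,
    Ideal.ofList_singleton, Submodule.ideal_span_singleton_smul]
  simp only [Submodule.mem_smul_pointwise_iff_exists, Submodule.mem_top, true_and,
    forall_exists_index, eq_comm]

theorem isWeaklyRegular_triple_iff :
    IsWeaklyRegular M [a, b, c] ↔ IsWeaklyRegular M [a, b] ∧
      ∀ x : M, c • x ∈ Ideal.span {a, b} • (⊤ : Submodule R M) →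
        x ∈ Ideal.span {a, b} • (⊤ : Submodule R M) := by
  rw [show [a, b, c] = [a, b] ++ [c] from rfl, isWeaklyRegular_append_iff,
    isWeaklyRegular_singleton_iff, isSMulRegular_quotient_iff_mem_of_smul_mem, Ideal.ofList_cons,
    Ideal.ofList_singleton, ← Ideal.span_insert]

theorem mem_span_pair_of_mul_mem (h : IsRegular R [a, b, c]) (x : R)
    (hx : c * x ∈ Ideal.span {a, b}) : x ∈ Ideal.span {a, b} := by
  simpa using (isWeaklyRegular_triple_iff.1 h.toIsWeaklyRegular).2 x (by simpa using hx)

theorem exists_eq_smul_of_smul_add_smul_eq_zero (h : IsWeaklyRegular M [a, b]) {x y : M}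
    (hxy : a • x + b • y = 0) : ∃ z, x = b • z ∧ y = -(a • z) := by
  obtain ⟨ha, hb⟩ := isWeaklyRegular_pair_iff.1 h
  obtain ⟨z, rfl⟩ := hb y (-x) (by rw [smul_neg]; exact eq_neg_of_add_eq_zero_right hxy)
  refine ⟨-z, ha ?_, by simp⟩
  simpa [smul_comm a b z, add_eq_zero_iff_eq_neg] using hxy

theorem isWeaklyRegular_of_flat [Module.Flat R M] {rs : List R} (h : IsWeaklyRegular R rs) :
    IsWeaklyRegular M rs :=
  (TensorProduct.rid R M).isWeaklyRegular_congr rs |>.1 h.isWeaklyRegular_lTensor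

end RegularSequences

section Avoidance

variable {R : Type*} [CommRing R] [IsLocalRing R]

-- A prime ideal avoiding `z` contains at most one of the elements `x + z ^ k`.
theorem exists_isSMulRegular_add_pow [IsNoetherianRing R] {M : Type*} [AddCommGroup M]
    [Module R M] [Module.Finite R M] {z : R} (hz : z ∈ maximalIdeal R) (hreg : IsSMulRegular M z)
    (x : R) : ∃ k, IsSMulRegular M (x + z ^ (k + 2)) := by
  have mem_prime_iff (r : R) : (∃ P ∈ associatedPrimes R M, r ∈ P) ↔ ¬ IsSMulRegular M r := by
    simpa using Set.ext_iff.1 (biUnion_associatedPrimes_eq_compl_regular R M) r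
  by_contra! hbad
  choose P hP hxP using fun k => (mem_prime_iff _).2 (hbad k)
  obtain ⟨k, l, hkl, hPkl⟩ :=
    (associatedPrimes.finite R M).exists_lt_map_eq_of_forall_mem hP
  have hprime : (P k).IsPrime := (hP k).1
  have hdiff : z ^ (k + 2) * (1 - z ^ (l - k)) ∈ P k := by
    convert (P k).sub_mem (hxP k) (hPkl ▸ hxP l) using 1
    rw [show l + 2 = k + 2 + (l - k) by lia, pow_add]
    ring
  have hunit : IsUnit (1 - z ^ (l - k)) :=
    isUnit_one_sub_self_of_mem_nonunits _ (Ideal.pow_mem_of_mem _ hz _ (by lia))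
  rw [Ideal.mul_unit_mem_iff_mem _ hunit] at hdiff
  exact (mem_prime_iff z).1 ⟨P k, hP k, hprime.mem_of_pow_mem _ hdiff⟩ hreg

theorem mem_maximalIdeal_of_isRegular {rs : List R} (h : IsRegular R rs) {r : R} (hr : r ∈ rs) :
    r ∈ maximalIdeal R := by
  have hne : Ideal.ofList rs ≠ ⊤ := by simpa using h.top_ne_smul.symm
  exact le_maximalIdeal hne (Ideal.subset_span hr)

theorem exists_isRegular_append_add_mul [IsNoetherianRing R] {rs : List R} {y z : R}
    (h : IsRegular R (rs ++ [z])) (hy : y ∈ maximalIdeal R) :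
    ∃ e ∈ maximalIdeal R, IsRegular R (rs ++ [y + e * z]) := by
  have hmem : ∀ r ∈ rs ++ [z], r ∈ maximalIdeal R := fun r => mem_maximalIdeal_of_isRegular h
  have hz : z ∈ maximalIdeal R := hmem z (by simp)
  obtain ⟨hrs, hreg⟩ := (isWeaklyRegular_append_iff _ _ _).1 h.toIsWeaklyRegular
  obtain ⟨k, hk⟩ := exists_isSMulRegular_add_pow hz ((isWeaklyRegular_singleton_iff _ _).1 hreg) y
  have he : z ^ (k + 1) ∈ maximalIdeal R := Ideal.pow_mem_of_mem _ hz _ (by lia)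
  refine ⟨z ^ (k + 1), he, .of_isWeaklyRegular_of_mem_maximalIdeal _ ?_ ?_⟩
  · have := (maximalIdeal R).add_mem hy ((maximalIdeal R).mul_mem_right z he)
    grind
  · rw [isWeaklyRegular_append_iff, isWeaklyRegular_singleton_iff, ← pow_succ]
    exact ⟨hrs, hk⟩

theorem isRegular_append_sq {rs : List R} {z : R} (h : IsRegular R (rs ++ [z])) :
    IsRegular R (rs ++ [z ^ 2]) := by
  have hmem : ∀ r ∈ rs ++ [z], r ∈ maximalIdeal R := fun r => mem_maximalIdeal_of_isRegular h
  obtain ⟨hrs, hreg⟩ := (isWeaklyRegular_append_iff _ _ _).1 h.toIsWeaklyRegular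
  refine .of_isWeaklyRegular_of_mem_maximalIdeal _ ?_ ?_
  · have : z ^ 2 ∈ maximalIdeal R := Ideal.pow_mem_of_mem _ (hmem z (by simp)) _ two_pos
    grind
  · rw [isWeaklyRegular_append_iff, isWeaklyRegular_singleton_iff]
    exact ⟨hrs, ((isWeaklyRegular_singleton_iff _ _).1 hreg).pow 2⟩

end Avoidance

section LinearAlgebra

variable {R M N P : Type*} [CommRing R] [AddCommGroup M] [Module R M] [AddCommGroup N] [Module R N]
  [AddCommGroup P] [Module R P]

theorem exists_comp_eq_of_range_le [Module.Projective R P] {f : M →ₗ[R] N} {g : P →ₗ[R] N}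
    (h : g.range ≤ f.range) : ∃ s : P →ₗ[R] M, f ∘ₗ s = g := by
  obtain ⟨s, hs⟩ := Module.projective_lifting_property f.rangeRestrict
    (g.codRestrict f.range fun x => h ⟨x, rfl⟩) f.surjective_rangeRestrict
  exact ⟨s, by rw [← f.subtype_comp_codRestrict f.range f.mem_range_self, LinearMap.comp_assoc]
               exact congrArg (f.range.subtype ∘ₗ ·) hs⟩

theorem exists_bilinear_lift {S : Type*} [AddCommGroup S] [Module R S] [Module.Projective R M]
    [Module.Projective R N] {f : P →ₗ[R] S} {b : M →ₗ[R] N →ₗ[R] S}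
    (h : ∀ x y, b x y ∈ f.range) : ∃ B : M →ₗ[R] N →ₗ[R] P, ∀ x y, f (B x y) = b x y := by
  have hrange : (TensorProduct.lift b).range ≤ f.range := by
    rintro - ⟨t, rfl⟩
    induction t with
    | zero => simp
    | tmul x y => exact h x y
    | add s t hs ht => simpa using add_mem hs ht
  obtain ⟨B, hB⟩ := exists_comp_eq_of_range_le hrange
  exact ⟨TensorProduct.curry B, fun x y => LinearMap.congr_fun hB (TensorProduct.tmul R x y)⟩

theorem exists_linearEquiv_ker_prod [Module.Projective R P] {f : M →ₗ[R] P}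
    (hf : Function.Surjective f) :
    ∃ e : M ≃ₗ[R] f.ker × P, ∀ x : f.ker, e x = (x, 0) := by
  have hexact : Function.Exact f.ker.subtype f := f.exact_subtype_ker_map
  obtain ⟨e, he, -⟩ := ((hexact.split_tfae f.ker.injective_subtype hf).out 0 2).1
    (Module.projective_lifting_property f LinearMap.id hf)
  exact ⟨e, fun x => by simpa using congrArg e (LinearMap.congr_fun he x)⟩

theorem exists_retraction_ker [Module.Projective R P] {f : M →ₗ[R] P}
    (hf : Function.Surjective f) : ∃ π : M →ₗ[R] f.ker, ∀ x : f.ker, π x = x := by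
  obtain ⟨e, he⟩ := exists_linearEquiv_ker_prod hf
  exact ⟨LinearMap.fst R f.ker P ∘ₗ e.toLinearMap, fun x => by simp [he]⟩

theorem finite_ker_of_surjective [Module.Finite R M] [Module.Projective R P] {f : M →ₗ[R] P}
    (hf : Function.Surjective f) : Module.Finite R f.ker := by
  obtain ⟨π, hπ⟩ := exists_retraction_ker hf
  exact .of_surjective π fun x => ⟨x, hπ x⟩

theorem free_ker_of_surjective [IsLocalRing R] [Module.Finite R M] [Module.Free R M]
    [Module.Projective R P] {f : M →ₗ[R] P} (hf : Function.Surjective f) :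
    Module.Free R f.ker := by
  have := finite_ker_of_surjective hf
  obtain ⟨π, hπ⟩ := exists_retraction_ker hf
  have : Module.Projective R f.ker := .of_split f.ker.subtype π (LinearMap.ext hπ)
  exact Module.free_of_flat_of_isLocalRing

theorem finrank_ker_add_finrank_of_surjective [IsLocalRing R] [Module.Finite R M] [Module.Free R M]
    [Module.Finite R P] [Module.Free R P] {f : M →ₗ[R] P} (hf : Function.Surjective f) :
    Module.finrank R f.ker + Module.finrank R P = Module.finrank R M := by
  have := finite_ker_of_surjective hf
  have := free_ker_of_surjective hf
  obtain ⟨e, -⟩ := exists_linearEquiv_ker_prod hf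
  rw [e.finrank_eq, Module.finrank_prod]

theorem mem_smul_top_of_forall_dual_mem [Module.Free R M] {J : Ideal R} {x : M}
    (h : ∀ φ : Module.Dual R M, φ x ∈ J) : x ∈ J • (⊤ : Submodule R M) := by
  rw [← (Module.Free.chooseBasis R M).linearCombination_repr x, Finsupp.linearCombination_apply]
  exact Submodule.sum_mem _ fun i _ =>
    Submodule.smul_mem_smul (h ((Module.Free.chooseBasis R M).coord i)) trivial

theorem map_mem_smul_top {J : Ideal R} (f : M →ₗ[R] N) {x : M}
    (hx : x ∈ J • (⊤ : Submodule R M)) : f x ∈ J • (⊤ : Submodule R N) :=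
  Submodule.smul_top_le_comap_smul_top J f hx

theorem prod_mk_mem_smul_top {J : Ideal R} {x : M} {y : N} (hx : x ∈ J • (⊤ : Submodule R M))
    (hy : y ∈ J • (⊤ : Submodule R N)) : (x, y) ∈ J • (⊤ : Submodule R (M × N)) := by
  simpa using add_mem (map_mem_smul_top (LinearMap.inl R M N) hx)
    (map_mem_smul_top (LinearMap.inr R M N) hy)

theorem exists_dual_surjective_of_not_surjective [IsLocalRing R] [Module.Finite R P]
    [Module.Projective R P] {f : N →ₗ[R] P} (hf : ¬ Function.Surjective f) :
    ∃ ψ : Module.Dual R P, Function.Surjective ψ ∧ ∀ w, ψ (f w) ∈ maximalIdeal R := by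
  obtain ⟨S, hS, hfS⟩ := (eq_top_or_exists_le_coatom f.range).resolve_left
    (hf ∘ LinearMap.range_eq_top.1)
  obtain ⟨K, hK, ⟨e⟩⟩ := isSimpleModule_iff_quot_maximal.1 (isSimpleModule_iff_isCoatom.2 hS)
  obtain rfl := eq_maximalIdeal hK
  obtain ⟨ψ, hψ⟩ := Module.projective_lifting_property (maximalIdeal R).mkQ
    (e.toLinearMap ∘ₗ S.mkQ) (Submodule.mkQ_surjective _)
  replace hψ (x : P) : Submodule.Quotient.mk (ψ x) = e (Submodule.Quotient.mk x) :=
    LinearMap.congr_fun hψ x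
  refine ⟨ψ, ?_, fun w => ?_⟩
  · obtain ⟨y, hy⟩ := (e.surjective.comp (Submodule.mkQ_surjective S)) (Submodule.Quotient.mk 1)
    have hdiff : ψ y - 1 ∈ maximalIdeal R :=
      (Submodule.Quotient.eq _).1 ((hψ y).trans hy)
    have hunit : IsUnit (ψ y) := by
      by_contra h
      exact (Ideal.ne_top_iff_one _).1 (maximalIdeal.isMaximal R).ne_top
        (by simpa using sub_mem ((mem_maximalIdeal _).2 h) hdiff)
    obtain ⟨c, hc⟩ := hunit.exists_left_inv
    exact fun r => ⟨(r * c) • y, by rw [map_smul, smul_eq_mul, mul_assoc, hc, mul_one]⟩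
  · rw [← Submodule.Quotient.mk_eq_zero, hψ, (Submodule.Quotient.mk_eq_zero S).2 (hfS ⟨w, rfl⟩),
      map_zero]

theorem isUnit_matrix_of_mul_eq_smul_one {ι : Type*} [Fintype ι] [DecidableEq ι]
    {A C₁ C₂ : Matrix ι ι R} {x₁ x₂ : R} (hreg : IsWeaklyRegular R [x₁, x₂])
    (h₁ : C₁ * A = x₁ • 1) (h₂ : C₂ * A = x₂ • 1) : IsUnit A := by
  obtain ⟨hx₁, hx₂⟩ := isWeaklyRegular_pair_iff.1 (isWeaklyRegular_of_flat (M := Matrix ι ι R) hreg)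
  have hdet : IsLeftRegular A.det := by
    have hpow : IsLeftRegular (C₁.det * A.det) := by
      rw [← Matrix.det_mul, h₁, Matrix.det_smul, Matrix.det_one, mul_one]
      exact (isWeaklyRegular_pair_iff.1 hreg).1.pow _
    exact hpow.of_mul
  have hC : x₂ • C₁ = x₁ • C₂ := by
    refine (Matrix.isRegular_of_isLeftRegular_det hdet).right ?_
    simp only [Matrix.smul_mul, h₁, h₂, smul_comm x₁ x₂]
  obtain ⟨C, rfl⟩ := hx₂ _ _ hC
  exact .of_mul_eq_one_right C (hx₁ (by simpa only [Matrix.smul_mul] using h₁))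

theorem surjective_of_comp_eq_smul_id [StrongRankCondition R] [Module.Finite R M] [Module.Free R M]
    [Module.Finite R N] [Module.Free R N] (hrank : Module.finrank R M = Module.finrank R N)
    {A : M →ₗ[R] N} {C₁ C₂ : N →ₗ[R] M} {x₁ x₂ : R} (hreg : IsWeaklyRegular R [x₁, x₂])
    (h₁ : C₁ ∘ₗ A = x₁ • LinearMap.id) (h₂ : C₂ ∘ₗ A = x₂ • LinearMap.id) :
    Function.Surjective A := by
  classical
  let e := LinearEquiv.ofFinrankEq N M hrank.symm
  let b := Module.Free.chooseBasis R M
  have hmul (C : N →ₗ[R] M) {x : R} (h : C ∘ₗ A = x • LinearMap.id) :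
      LinearMap.toMatrixAlgEquiv b (C ∘ₗ e.symm) * LinearMap.toMatrixAlgEquiv b (e ∘ₗ A) =
        x • 1 := by
    rw [← map_mul, ← map_one (LinearMap.toMatrixAlgEquiv b), ← map_smul]
    congr 1
    ext y
    simpa using LinearMap.congr_fun h y
  have hunit : IsUnit (e.toLinearMap ∘ₗ A) := (isUnit_matrix_of_mul_eq_smul_one hreg (hmul C₁ h₁)
    (hmul C₂ h₂)).of_map (LinearMap.toMatrixAlgEquiv b)
  have := ((Module.End.isUnit_iff _).1 hunit).surjective
  simpa using this

end LinearAlgebra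

section Resolutions

variable {Q F₁ F₂ F₃ : Type*} [CommRing Q] [AddCommGroup F₁] [Module Q F₁] [AddCommGroup F₂]
  [Module Q F₂] [AddCommGroup F₃] [Module Q F₃]

/-- A resolution `0 → F₃ → F₂ → F₁ → Q` of length three of the cyclic module `Q ⧸ d₁.range`.
Freeness of the `Fᵢ` is left to the lemmas that need it. -/
structure CyclicResolution (Q F₁ F₂ F₃ : Type*) [CommRing Q] [AddCommGroup F₁] [Module Q F₁]
    [AddCommGroup F₂] [Module Q F₂] [AddCommGroup F₃] [Module Q F₃] where
  d₁ : F₁ →ₗ[Q] Q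
  d₂ : F₂ →ₗ[Q] F₁
  d₃ : F₃ →ₗ[Q] F₂
  exact_d₂_d₁ : Function.Exact d₂ d₁
  exact_d₃_d₂ : Function.Exact d₃ d₂
  injective_d₃ : Function.Injective d₃

namespace CyclicResolution

/-- Minimality over a local ring: every differential vanishes modulo the maximal ideal. -/
structure IsMinimal [IsLocalRing Q] (F : CyclicResolution Q F₁ F₂ F₃) : Prop where
  d₁_mem (v : F₁) : F.d₁ v ∈ maximalIdeal Q
  d₂_mem (w : F₂) : F.d₂ w ∈ maximalIdeal Q • (⊤ : Submodule Q F₁)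
  d₃_mem (f : F₃) : F.d₃ f ∈ maximalIdeal Q • (⊤ : Submodule Q F₂)

/-- The degree `(1, 1)` and `(1, 2)` components of a differential graded multiplication on `F`,
with the Leibniz rule but without (graded) commutativity or associativity. -/
structure Multiplication (F : CyclicResolution Q F₁ F₂ F₃) where
  mul₁ : F₁ →ₗ[Q] F₁ →ₗ[Q] F₂
  mul₂ : F₁ →ₗ[Q] F₂ →ₗ[Q] F₃
  d₂_mul₁ (u v : F₁) : F.d₂ (mul₁ u v) = F.d₁ u • v - F.d₁ v • u
  d₃_mul₂ (u : F₁) (w : F₂) : F.d₃ (mul₂ u w) = F.d₁ u • w - mul₁ u (F.d₂ w)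

variable (F : CyclicResolution Q F₁ F₂ F₃)

@[simp]
theorem d₁_d₂ (w : F₂) : F.d₁ (F.d₂ w) = 0 := F.exact_d₂_d₁.apply_apply_eq_zero w

@[simp]
theorem d₂_d₃ (f : F₃) : F.d₂ (F.d₃ f) = 0 := F.exact_d₃_d₂.apply_apply_eq_zero f

theorem exists_d₂_mul₁ [Module.Projective Q F₁] : ∃ μ : F₁ →ₗ[Q] F₁ →ₗ[Q] F₂,
    ∀ u v, F.d₂ (μ u v) = F.d₁ u • v - F.d₁ v • u := by
  let β : F₁ →ₗ[Q] F₁ →ₗ[Q] F₁ := LinearMap.lsmul Q F₁ ∘ₗ F.d₁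
  refine exists_bilinear_lift (b := β - β.flip) fun u v => (F.exact_d₂_d₁ _).1 ?_
  simp [β, mul_comm]

theorem nonempty_multiplication [Module.Projective Q F₁] [Module.Projective Q F₂] :
    Nonempty F.Multiplication := by
  obtain ⟨mul₁, d₂_mul₁⟩ := F.exists_d₂_mul₁
  let β : F₁ →ₗ[Q] F₂ →ₗ[Q] F₂ := LinearMap.lsmul Q F₂ ∘ₗ F.d₁
  obtain ⟨mul₂, d₃_mul₂⟩ := exists_bilinear_lift (f := F.d₃) (b := β - mul₁.compl₂ F.d₂)
    fun u w => (F.exact_d₃_d₂ _).1 (by simp [β, d₂_mul₁])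
  exact ⟨mul₁, mul₂, d₂_mul₁, d₃_mul₂⟩

namespace Multiplication

variable {F} (μ : F.Multiplication)

theorem mul₂_d₃ (u : F₁) (f : F₃) : μ.mul₂ u (F.d₃ f) = F.d₁ u • f :=
  F.injective_d₃ (by simp [μ.d₃_mul₂])

theorem exists_d₃_eq_mul₁_self (u : F₁) : ∃ g, F.d₃ g = μ.mul₁ u u :=
  (F.exact_d₃_d₂ _).1 (by simp [μ.d₂_mul₁])

end Multiplication

end CyclicResolution

theorem HasResolutionFormat.exists_cyclicResolution [IsLocalRing Q] {I : Ideal Q} {m n : ℕ}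
    (h : HasResolutionFormat I m n) :
    ∃ F : CyclicResolution Q (Fin m → Q) (Fin (m + n - 1) → Q) (Fin n → Q),
      F.IsMinimal ∧ F.d₁.range = I := by
  obtain ⟨d₁, d₂, d₃, rfl, h₁, h₂, h₃, hd₁, hd₂, hd₃⟩ := h
  exact ⟨⟨d₁, d₂, d₃, LinearMap.exact_iff.2 h₁.symm, LinearMap.exact_iff.2 h₂.symm,
    LinearMap.ker_eq_bot.1 h₃⟩,
    ⟨fun v => hd₁ ⟨v, rfl⟩, fun w => hd₂ ⟨w, rfl⟩, fun f => hd₃ ⟨f, rfl⟩⟩, rfl⟩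

theorem CyclicResolution.IsMinimal.hasResolutionFormat [IsLocalRing Q] [Module.Finite Q F₁]
    [Module.Free Q F₁] [Module.Finite Q F₂] [Module.Free Q F₂] [Module.Finite Q F₃]
    [Module.Free Q F₃] {F : CyclicResolution Q F₁ F₂ F₃} (hF : F.IsMinimal) {m n : ℕ}
    (h₁ : Module.finrank Q F₁ = m) (h₂ : Module.finrank Q F₂ = m + n - 1)
    (h₃ : Module.finrank Q F₃ = n) : HasResolutionFormat F.d₁.range m n := by
  let e₁ : F₁ ≃ₗ[Q] (Fin m → Q) := LinearEquiv.ofFinrankEq _ _ (by simpa using h₁)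
  let e₂ : F₂ ≃ₗ[Q] (Fin (m + n - 1) → Q) := LinearEquiv.ofFinrankEq _ _ (by simpa using h₂)
  let e₃ : F₃ ≃ₗ[Q] (Fin n → Q) := LinearEquiv.ofFinrankEq _ _ (by simpa using h₃)
  refine ⟨F.d₁ ∘ₗ e₁.symm, e₁ ∘ₗ F.d₂ ∘ₗ e₂.symm, e₂ ∘ₗ F.d₃ ∘ₗ e₃.symm, ?_, ?_, ?_, ?_, ?_, ?_, ?_⟩
  · rw [LinearMap.range_comp, LinearEquiv.range, Submodule.map_top]
  · refine (LinearMap.exact_iff.1 fun v => ?_).symm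
    simpa [← LinearEquiv.eq_symm_apply, e₂.symm.exists_congr_left] using F.exact_d₂_d₁ (e₁.symm v)
  · refine (LinearMap.exact_iff.1 fun w => ?_).symm
    simpa [← LinearEquiv.eq_symm_apply, e₃.symm.exists_congr_left] using F.exact_d₃_d₂ (e₂.symm w)
  · exact LinearMap.ker_eq_bot.2
      (e₂.injective.comp (F.injective_d₃.comp e₃.symm.injective))
  · rintro - ⟨v, rfl⟩
    exact hF.d₁_mem v
  · rintro - ⟨w, rfl⟩
    exact map_mem_smul_top e₁.toLinearMap (hF.d₂_mem _)
  · rintro - ⟨f, rfl⟩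
    exact map_mem_smul_top e₂.toLinearMap (hF.d₃_mem _)

end Resolutions

section Multiplication

variable {Q F₁ F₂ F₃ : Type*} [CommRing Q] [AddCommGroup F₁] [Module Q F₁] [AddCommGroup F₂]
  [Module Q F₂] [AddCommGroup F₃] [Module Q F₃] {F : CyclicResolution Q F₁ F₂ F₃}

namespace CyclicResolution

namespace Multiplication

variable (μ : F.Multiplication)

theorem d₃_mul₂_mul₁ (u₁ u₂ u₃ : F₁) : F.d₃ (μ.mul₂ u₃ (μ.mul₁ u₂ u₁)) =
    F.d₁ u₃ • μ.mul₁ u₂ u₁ - F.d₁ u₂ • μ.mul₁ u₃ u₁ + F.d₁ u₁ • μ.mul₁ u₃ u₂ := by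
  rw [μ.d₃_mul₂, μ.d₂_mul₁, map_sub, map_smul, map_smul]
  abel

theorem dual_mul₂_mul₁_mem_colon (ε : Module.Dual Q F₃) (u₁ u₂ u₃ : F₁) :
    ε (μ.mul₂ u₃ (μ.mul₁ u₂ u₁)) ∈
      (Ideal.span {F.d₁ u₁, F.d₁ u₂, F.d₁ u₃}).colon (F.d₁.range : Set Q) := by
  rw [Submodule.mem_colon]
  rintro - ⟨v, rfl⟩
  rw [smul_eq_mul, mul_comm, ← smul_eq_mul, ← map_smul, ← μ.mul₂_d₃, d₃_mul₂_mul₁]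
  refine Ideal.mem_span_insert.2 ⟨ε (μ.mul₂ v (μ.mul₁ u₃ u₂)), _, Ideal.mem_span_pair.2
    ⟨-ε (μ.mul₂ v (μ.mul₁ u₃ u₁)), ε (μ.mul₂ v (μ.mul₁ u₂ u₁)), rfl⟩, ?_⟩
  simp only [map_add, map_sub, map_smul, smul_eq_mul]
  ring

theorem mem_range_d₁_of_smul_mem [Module.Flat Q F₁] [Module.Flat Q F₂] {u₁ u₂ u₃ : F₁}
    (hreg : IsWeaklyRegular Q [F.d₁ u₁, F.d₁ u₂, F.d₁ u₃]) {r : Q}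
    (hr : r • μ.mul₂ u₃ (μ.mul₁ u₂ u₁) ∈
      Ideal.span {F.d₁ u₁, F.d₁ u₂, F.d₁ u₃} • (⊤ : Submodule Q F₃)) :
    r ∈ F.d₁.range := by
  obtain ⟨f₁, f₂, f₃, hf⟩ := mem_span_triple_smul_top.1 hr
  have hpair : IsWeaklyRegular Q [F.d₁ u₁, F.d₁ u₂] := (isWeaklyRegular_triple_iff.1 hreg).1
  obtain ⟨k₁, k₂, hk⟩ : ∃ k₁ k₂, r • μ.mul₁ u₂ u₁ - F.d₃ f₃ = F.d₁ u₁ • k₁ + F.d₁ u₂ • k₂ := by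
    have hd₃ := congrArg F.d₃ hf
    simp only [map_add, map_smul, d₃_mul₂_mul₁] at hd₃
    refine mem_span_pair_smul_top.1
      ((isWeaklyRegular_triple_iff.1 (isWeaklyRegular_of_flat (M := F₂) hreg)).2 _ <|
        mem_span_pair_smul_top.2
          ⟨F.d₃ f₁ - r • μ.mul₁ u₃ u₂, F.d₃ f₂ + r • μ.mul₁ u₃ u₁, ?_⟩)
    linear_combination (norm := module) hd₃
  obtain ⟨l, hl⟩ : ∃ l, r • u₁ - F.d₂ k₂ = F.d₁ u₁ • l := by
    have hd₂ := congrArg F.d₂ hk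
    simp only [map_add, map_sub, map_smul, d₂_d₃, μ.d₂_mul₁] at hd₂
    refine (isWeaklyRegular_pair_iff.1 (isWeaklyRegular_of_flat (M := F₁) hpair)).2 _
      (F.d₂ k₁ + r • u₂) ?_
    linear_combination (norm := module) hd₂
  refine ⟨l, (isWeaklyRegular_pair_iff.1 hpair).1 ?_⟩
  simpa [mul_comm] using (congrArg F.d₁ hl).symm

end Multiplication

theorem colon_colon_range_d₁ [Module.Free Q F₁] [Module.Free Q F₂] [Module.Free Q F₃]
    {u₁ u₂ u₃ : F₁} (hreg : IsWeaklyRegular Q [F.d₁ u₁, F.d₁ u₂, F.d₁ u₃]) :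
    (Ideal.span {F.d₁ u₁, F.d₁ u₂, F.d₁ u₃}).colon
      ((Ideal.span {F.d₁ u₁, F.d₁ u₂, F.d₁ u₃}).colon (F.d₁.range : Set Q) : Set Q) =
        F.d₁.range := by
  obtain ⟨μ⟩ := F.nonempty_multiplication
  refine le_antisymm (fun r hr => μ.mem_range_d₁_of_smul_mem hreg ?_) fun r hr => ?_
  · refine mem_smul_top_of_forall_dual_mem fun ε => ?_
    rw [map_smul]
    exact Submodule.mem_colon.1 hr _ (μ.dual_mul₂_mul₁_mem_colon ε u₁ u₂ u₃)
  · refine Submodule.mem_colon.2 fun s hs => ?_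
    rw [smul_eq_mul, mul_comm]
    exact Submodule.mem_colon.1 hs r hr

namespace Multiplication

variable [IsLocalRing Q] [Module.Finite Q F₁] [Module.Free Q F₁] [Module.Finite Q F₂]
  [Module.Free Q F₂] [Module.Finite Q F₃] [Module.Free Q F₃] (μ : F.Multiplication)

-- Here `d₃` restricts to a map `ker ε → ker B` of free modules of equal rank, which the maps
-- `mul₂ v` invert up to the factor `d₁ v`. A regular pair of such factors makes it an isomorphism,
-- so by minimality both kernels vanish.
theorem finrank_eq_one_of_surjective (hF : F.IsMinimal)
    (hrank : Module.finrank Q F₁ + Module.finrank Q F₃ = Module.finrank Q F₂ + 1)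
    {v₁ v₂ : F₁} (hreg : IsWeaklyRegular Q [F.d₁ v₁, F.d₁ v₂])
    {ε : Module.Dual Q F₃} (hε : Function.Surjective ε)
    (hB : Function.Surjective (μ.mul₂.compr₂ ε).flip) : Module.finrank Q F₃ = 1 := by
  set B := (μ.mul₂.compr₂ ε).flip
  have := finite_ker_of_surjective hε
  have := free_ker_of_surjective hε
  have := finite_ker_of_surjective hB
  have := free_ker_of_surjective hB
  have hrankε := finrank_ker_add_finrank_of_surjective hε
  have hrankB := finrank_ker_add_finrank_of_surjective hB
  rw [Module.finrank_self] at hrankε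
  rw [Module.finrank_linearMap_self] at hrankB
  let A : ε.ker →ₗ[Q] B.ker := F.d₃.restrict fun f hf =>
    LinearMap.ext fun v => by simp [B, μ.mul₂_d₃, LinearMap.mem_ker.1 hf]
  let C (v : F₁) : B.ker →ₗ[Q] ε.ker := (μ.mul₂ v).restrict fun w hw => LinearMap.congr_fun hw v
  have hCA (v : F₁) : C v ∘ₗ A = F.d₁ v • LinearMap.id :=
    LinearMap.ext fun f => Subtype.ext (μ.mul₂_d₃ v f)
  have hA : Function.Surjective A :=
    surjective_of_comp_eq_smul_id (by omega) hreg (hCA v₁) (hCA v₂)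
  have htop : (⊤ : Submodule Q B.ker) = ⊥ := by
    obtain ⟨π, hπ⟩ := exists_retraction_ker hB
    refine Submodule.eq_bot_of_le_smul_of_le_jacobson_bot (maximalIdeal Q) ⊤ Module.Finite.fg_top
      (fun w _ => ?_) (maximalIdeal_le_jacobson _)
    obtain ⟨f, rfl⟩ := hA w
    rw [← hπ (A f)]
    exact map_mem_smul_top π (hF.d₃_mem f)
  have := (Submodule.subsingleton_iff Q).1 (subsingleton_of_bot_eq_top htop.symm)
  rw [Module.finrank_zero_of_subsingleton (M := B.ker)] at hrankB
  omega

theorem exists_forall_dual_mul₂_mem (hF : F.IsMinimal)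
    (hrank : Module.finrank Q F₁ + Module.finrank Q F₃ = Module.finrank Q F₂ + 1)
    (hrank₃ : 2 ≤ Module.finrank Q F₃) {v₁ v₂ : F₁} (hreg : IsWeaklyRegular Q [F.d₁ v₁, F.d₁ v₂])
    {ε : Module.Dual Q F₃} (hε : Function.Surjective ε) :
    ∃ (u : F₁) (o : Module.Dual Q F₁), o u = 1 ∧ ∀ w, ε (μ.mul₂ u w) ∈ maximalIdeal Q := by
  have hB : ¬ Function.Surjective (μ.mul₂.compr₂ ε).flip := fun h => by
    have := μ.finrank_eq_one_of_surjective hF hrank hreg hε h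
    omega
  obtain ⟨ψ, hψ, hψB⟩ := exists_dual_surjective_of_not_surjective hB
  obtain ⟨u, rfl⟩ := (Module.evalEquiv Q F₁).surjective ψ
  obtain ⟨o, ho⟩ := hψ 1
  exact ⟨u, o, ho, hψB⟩

end Multiplication

end CyclicResolution

end Multiplication

section Linkage

section Ideals

variable {R : Type*} [CommRing R] {A I J : Ideal R} {x y z c : R}

theorem mem_sup_span_singleton_mul :
    x ∈ A ⊔ Ideal.span {y} * J ↔ ∃ s ∈ J, x - y * s ∈ A := by
  simp only [Submodule.mem_sup, Ideal.mem_span_singleton_mul]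
  exact ⟨fun ⟨a, ha, _, ⟨s, hs, h⟩, h'⟩ => ⟨s, hs, by rwa [← h', h, add_sub_cancel_right]⟩,
    fun ⟨s, hs, h⟩ => ⟨_, h, _, ⟨s, hs, rfl⟩, sub_add_cancel _ _⟩⟩

theorem mem_sup_span_singleton : x ∈ A ⊔ Ideal.span {y} ↔ ∃ s, x - y * s ∈ A := by
  rw [← Ideal.mul_top (Ideal.span {y}), mem_sup_span_singleton_mul]
  simp

theorem span_triple_eq_sup (a b c : R) :
    Ideal.span {a, b, c} = Ideal.span {a, b} ⊔ Ideal.span {c} := by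
  simp only [Ideal.span_insert, sup_assoc]

theorem colon_colon_eq_of_sup_mul_eq_sup_mul
    (hz : ∀ x, z * x ∈ A → x ∈ A) (hc : ∀ x, c * x ∈ A → x ∈ A) (hAJ : A ≤ J)
    (hIJ : A ⊔ Ideal.span {z} * J = A ⊔ Ideal.span {c} * I)
    (hI : (A ⊔ Ideal.span {z}).colon ((A ⊔ Ideal.span {z}).colon (I : Set R) : Set R) = I) :
    (A ⊔ Ideal.span {c}).colon ((A ⊔ Ideal.span {z}).colon (I : Set R) : Set R) = J := by
  ext r
  simp only [Submodule.mem_colon, SetLike.mem_coe, smul_eq_mul, mem_sup_span_singleton]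
  constructor
  · intro hr
    obtain ⟨s, hs⟩ := hr z fun i _ => ⟨i, by simp⟩
    have hsI : s ∈ I := by
      rw [← hI]
      simp only [Submodule.mem_colon, SetLike.mem_coe, smul_eq_mul, mem_sup_span_singleton]
      intro k hk
      obtain ⟨y, hy⟩ := hr k hk
      refine ⟨y, hc _ ?_⟩
      convert sub_mem (A.mul_mem_left z hy) (A.mul_mem_left k hs) using 1
      ring
    have hzr : z * r ∈ A ⊔ Ideal.span {z} * J := by
      rw [hIJ, mem_sup_span_singleton_mul]
      exact ⟨s, hsI, by rwa [mul_comm z r]⟩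
    obtain ⟨j, hj, hrj⟩ := mem_sup_span_singleton_mul.1 hzr
    exact (sub_add_cancel r j) ▸ J.add_mem (hAJ (hz _ (by rwa [mul_sub]))) hj
  · intro hr k hk
    have hzr : z * r ∈ A ⊔ Ideal.span {c} * I := by
      rw [← hIJ, mem_sup_span_singleton_mul]
      exact ⟨r, hr, by simp⟩
    obtain ⟨i, hi, hri⟩ := mem_sup_span_singleton_mul.1 hzr
    obtain ⟨y, hy⟩ := hk i hi
    refine ⟨y, hz _ ?_⟩
    convert add_mem (A.mul_mem_left k hri) (A.mul_mem_left c hy) using 1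
    ring

end Ideals

variable {Q F₁ F₂ F₃ : Type*} [CommRing Q] [AddCommGroup F₁] [Module Q F₁] [AddCommGroup F₂]
  [Module Q F₂] [AddCommGroup F₃] [Module Q F₃] {F : CyclicResolution Q F₁ F₂ F₃} {a₁ a₂ : Q}

/-- A morphism of complexes from `F₃ → F₂ → F₁` to the Koszul complex `Q → Q × Q → Q` of
`a₁, a₂`, with components `ε`, `(p, q)` and `φ`. -/
structure KoszulMap (F : CyclicResolution Q F₁ F₂ F₃) (a₁ a₂ : Q) where
  φ : Module.Dual Q F₁
  p : Module.Dual Q F₂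
  q : Module.Dual Q F₂
  ε : Module.Dual Q F₃
  φ_d₂ (w : F₂) : φ (F.d₂ w) = a₁ * p w + a₂ * q w
  p_d₃ (f : F₃) : p (F.d₃ f) = -(a₂ * ε f)
  q_d₃ (f : F₃) : q (F.d₃ f) = a₁ * ε f

namespace KoszulMap

/-- The ideal `(a₁, a₂) + φ(F₁)`: the zeroth homology of the mapping cone is the quotient by it. -/
def ideal (κ : KoszulMap F a₁ a₂) : Ideal Q := Ideal.span {a₁, a₂} ⊔ κ.φ.range

variable (κ : KoszulMap F a₁ a₂)

theorem d₁_mul_φ_sub_mem (v v' : F₁) :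
    F.d₁ v * κ.φ v' - F.d₁ v' * κ.φ v ∈ Ideal.span {a₁, a₂} := by
  obtain ⟨w, hw⟩ := (F.exact_d₂_d₁ (F.d₁ v • v' - F.d₁ v' • v)).1 (by simp [mul_comm])
  refine Ideal.mem_span_pair.2 ⟨κ.p w, κ.q w, ?_⟩
  simpa [hw, mul_comm] using (κ.φ_d₂ w).symm

theorem φ_mem_of_d₁_mem {z : F₁}
    (hz : ∀ x, F.d₁ z * x ∈ Ideal.span {a₁, a₂} → x ∈ Ideal.span {a₁, a₂}) {v : F₁}
    (hv : F.d₁ v ∈ Ideal.span {a₁, a₂}) : κ.φ v ∈ Ideal.span {a₁, a₂} :=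
  hz _ <| by simpa using add_mem (κ.d₁_mul_φ_sub_mem z v) (Ideal.mul_mem_right (κ.φ z) _ hv)

theorem d₁_mem_of_φ_mem {z : F₁}
    (hz : ∀ x, κ.φ z * x ∈ Ideal.span {a₁, a₂} → x ∈ Ideal.span {a₁, a₂}) {v : F₁}
    (hv : κ.φ v ∈ Ideal.span {a₁, a₂}) : F.d₁ v ∈ Ideal.span {a₁, a₂} :=
  hz _ <| by
    simpa [mul_comm] using sub_mem (Ideal.mul_mem_left _ (F.d₁ z) hv) (κ.d₁_mul_φ_sub_mem z v)

theorem sup_mul_ideal (z : F₁) :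
    Ideal.span {a₁, a₂} ⊔ Ideal.span {F.d₁ z} * κ.ideal =
      Ideal.span {a₁, a₂} ⊔ Ideal.span {κ.φ z} * F.d₁.range := by
  ext x
  simp only [mem_sup_span_singleton_mul]
  constructor
  · rintro ⟨s, hs, hx⟩
    obtain ⟨a, ha, -, ⟨v, rfl⟩, rfl⟩ := Submodule.mem_sup.1 hs
    refine ⟨F.d₁ v, ⟨v, rfl⟩, ?_⟩
    convert add_mem (add_mem hx (Ideal.mul_mem_left _ (F.d₁ z) ha)) (κ.d₁_mul_φ_sub_mem z v)
      using 1
    ring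
  · rintro ⟨-, ⟨v, rfl⟩, hx⟩
    refine ⟨κ.φ v, Submodule.mem_sup_right ⟨v, rfl⟩, ?_⟩
    convert sub_mem hx (κ.d₁_mul_φ_sub_mem z v) using 1
    ring

theorem linked [Module.Free Q F₁] [Module.Free Q F₂] [Module.Free Q F₃]
    (ha₁ : a₁ ∈ F.d₁.range) (ha₂ : a₂ ∈ F.d₁.range) {z : F₁}
    (hz : IsRegular Q [a₁, a₂, F.d₁ z]) (hφ : IsRegular Q [a₁, a₂, κ.φ z]) :
    Linked F.d₁.range κ.ideal := by
  obtain ⟨u₁, rfl⟩ := ha₁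
  obtain ⟨u₂, rfl⟩ := ha₂
  let K := (Ideal.span {F.d₁ u₁, F.d₁ u₂, F.d₁ z}).colon (F.d₁.range : Set Q)
  have le_K : Ideal.span {F.d₁ u₁, F.d₁ u₂, F.d₁ z} ≤ K := fun x hx =>
    Submodule.mem_colon.2 fun s _ => Ideal.mul_mem_right s _ hx
  have φ_mem_K : κ.φ z ∈ K := by
    refine Submodule.mem_colon.2 ?_
    rintro - ⟨v, rfl⟩
    rw [span_triple_eq_sup, mem_sup_span_singleton]
    exact ⟨κ.φ v, by simpa [mul_comm] using neg_mem (κ.d₁_mul_φ_sub_mem z v)⟩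
  have hIK : DirectlyLinked F.d₁.range K :=
    ⟨F.d₁ u₁, F.d₁ u₂, F.d₁ z, ⟨u₁, rfl⟩, ⟨u₂, rfl⟩, ⟨z, rfl⟩, hz, rfl⟩
  have hKJ : DirectlyLinked K κ.ideal := by
    refine ⟨F.d₁ u₁, F.d₁ u₂, κ.φ z, le_K (Ideal.subset_span (by simp)),
      le_K (Ideal.subset_span (by simp)), φ_mem_K, hφ, ?_⟩
    have hI := F.colon_colon_range_d₁ hz.toIsWeaklyRegular
    simp only [K, span_triple_eq_sup] at hI ⊢
    exact (colon_colon_eq_of_sup_mul_eq_sup_mul (mem_span_pair_of_mul_mem hz)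
      (mem_span_pair_of_mul_mem hφ) le_sup_left (κ.sup_mul_ideal z) hI).symm
  exact (Relation.ReflTransGen.single hIK).tail hKJ

/-- The morphism homotopic to `κ` along `(σ, τ) : F₁ → Q × Q`. -/
def homotopic (σ τ : Module.Dual Q F₁) : KoszulMap F a₁ a₂ where
  φ := κ.φ - (a₁ • σ + a₂ • τ)
  p := κ.p - σ ∘ₗ F.d₂
  q := κ.q - τ ∘ₗ F.d₂
  ε := κ.ε
  φ_d₂ w := by
    simp only [LinearMap.sub_apply, LinearMap.add_apply, LinearMap.smul_apply,
      LinearMap.comp_apply, smul_eq_mul, κ.φ_d₂]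
    ring
  p_d₃ f := by simp [κ.p_d₃]
  q_d₃ f := by simp [κ.q_d₃]

theorem ideal_homotopic (σ τ : Module.Dual Q F₁) : (κ.homotopic σ τ).ideal = κ.ideal := by
  have hmem (v : F₁) : a₁ * σ v + a₂ * τ v ∈ Ideal.span {a₁, a₂} :=
    Ideal.mem_span_pair.2 ⟨σ v, τ v, by ring⟩
  refine le_antisymm (sup_le le_sup_left ?_) (sup_le le_sup_left ?_)
  · rintro - ⟨v, rfl⟩
    exact sub_mem (Submodule.mem_sup_right ⟨v, rfl⟩) (Submodule.mem_sup_left (hmem v))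
  · rintro - ⟨v, rfl⟩
    exact Submodule.mem_sup.2 ⟨_, hmem v, (κ.homotopic σ τ).φ v, ⟨v, rfl⟩, by simp [homotopic]⟩

end KoszulMap

end Linkage

section Cone

variable {Q F₁ F₂ F₃ : Type*} [CommRing Q] [AddCommGroup F₁] [Module Q F₁] [AddCommGroup F₂]
  [Module Q F₂] [AddCommGroup F₃] [Module Q F₃] {F : CyclicResolution Q F₁ F₂ F₃} {u₁ u₂ : F₁}

/-- A morphism from `F₃ → F₂ → F₁` to the Koszul complex `K` of `d₁ u₁, d₁ u₂`, together with a
lift of `K` to `F` (its generators go to `u₁` and `u₂`, its syzygy to `h`) and a homotopy to zero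
of the composite `K → F → K` (sending the two generators to `(0, 0)` and `(s, t)`). The functional
`o` splits off the summand of `F₁` generated by `u₁`. -/
structure ReducedKoszulMap (F : CyclicResolution Q F₁ F₂ F₃) (u₁ u₂ : F₁) extends
    KoszulMap F (F.d₁ u₁) (F.d₁ u₂) where
  o : Module.Dual Q F₁
  h : F₂
  s : Q
  t : Q
  o_u₁ : o u₁ = 1
  φ_u₁ : φ u₁ = 0
  φ_u₂ : φ u₂ = F.d₁ u₁ * s + F.d₁ u₂ * t
  d₂_h : F.d₂ h = F.d₁ u₂ • u₁ - F.d₁ u₁ • u₂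
  p_h : p h = -(F.d₁ u₁ * s)
  q_h : q h = -(F.d₁ u₁ * t)

namespace ReducedKoszulMap

variable (κ : ReducedKoszulMap F u₁ u₂)

/-- The projection of `F₁` onto `ker o` along `u₁`. -/
def proj : F₁ →ₗ[Q] κ.o.ker :=
  (LinearMap.id - LinearMap.toSpanSingleton Q F₁ u₁ ∘ₗ κ.o).codRestrict κ.o.ker fun v => by
    simp [κ.o_u₁]

theorem coe_proj (v : F₁) : (κ.proj v : F₁) = v - κ.o v • u₁ := rfl

theorem proj_coe (v : κ.o.ker) : κ.proj v = v :=
  Subtype.ext (by rw [coe_proj, LinearMap.mem_ker.1 v.2, zero_smul, sub_zero])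

theorem proj_u₁ : κ.proj u₁ = 0 :=
  Subtype.ext (by rw [coe_proj, κ.o_u₁, one_smul, sub_self, ZeroMemClass.coe_zero])

theorem φ_proj (v : F₁) : κ.φ (κ.proj v) = κ.φ v := by
  rw [coe_proj, map_sub, map_smul, κ.φ_u₁, smul_zero, sub_zero]

/-- The first differential of the iterated mapping cone of `K → F → K`, after cancelling the
summand `Q u₁` of `F₁` and the image of `ε`. -/
def coneD₁ : Q × Q × κ.o.ker →ₗ[Q] Q :=
  (LinearMap.mulLeft Q (F.d₁ u₁)).coprod
    ((LinearMap.mulLeft Q (F.d₁ u₂)).coprod (κ.φ ∘ₗ κ.o.ker.subtype))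

/-- The second differential of the iterated mapping cone. -/
def coneD₂ : F₂ × Q →ₗ[Q] Q × Q × κ.o.ker :=
  (-κ.p.coprod (LinearMap.mulRight Q κ.s)).prod <| (-κ.q.coprod (LinearMap.mulRight Q κ.t)).prod <|
    κ.proj ∘ₗ F.d₂.coprod (LinearMap.toSpanSingleton Q F₁ u₂)

/-- The third differential of the iterated mapping cone. -/
def coneD₃ : κ.ε.ker × Q →ₗ[Q] F₂ × Q :=
  ((F.d₃ ∘ₗ κ.ε.ker.subtype).coprod (LinearMap.toSpanSingleton Q F₂ κ.h)).prod
    (LinearMap.mulLeft Q (F.d₁ u₁) ∘ₗ LinearMap.snd Q κ.ε.ker Q)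

theorem coneD₁_apply (α β : Q) (v : κ.o.ker) :
    κ.coneD₁ (α, β, v) = F.d₁ u₁ * α + F.d₁ u₂ * β + κ.φ v :=
  (add_assoc _ _ _).symm

theorem coneD₂_apply (w : F₂) (γ : Q) : κ.coneD₂ (w, γ) =
    (-(κ.p w + γ * κ.s), -(κ.q w + γ * κ.t), κ.proj (F.d₂ w + γ • u₂)) :=
  rfl

theorem coneD₃_apply (f : κ.ε.ker) (l : Q) :
    κ.coneD₃ (f, l) = (F.d₃ f + l • κ.h, F.d₁ u₁ * l) :=
  rfl

theorem φ_d₂_add_smul_u₂ (w : F₂) (γ : Q) : κ.φ (F.d₂ w + γ • u₂) =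
    F.d₁ u₁ * (κ.p w + γ * κ.s) + F.d₁ u₂ * (κ.q w + γ * κ.t) := by
  rw [map_add, map_smul, κ.φ_d₂, κ.φ_u₂, smul_eq_mul]
  ring

theorem coneD₁_coneD₂ (w : F₂) (γ : Q) : κ.coneD₁ (κ.coneD₂ (w, γ)) = 0 := by
  rw [coneD₂_apply, coneD₁_apply, φ_proj, φ_d₂_add_smul_u₂]
  ring

theorem coneD₂_coneD₃ (f : κ.ε.ker) (l : Q) : κ.coneD₂ (κ.coneD₃ (f, l)) = 0 := by
  have hf : κ.ε f = 0 := f.2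
  have hd₂ : F.d₂ (F.d₃ f + l • κ.h) + (F.d₁ u₁ * l) • u₂ = (l * F.d₁ u₂) • u₁ := by
    rw [map_add, map_smul, F.d₂_d₃, κ.d₂_h]
    module
  rw [coneD₃_apply, coneD₂_apply, hd₂, map_smul, proj_u₁, smul_zero]
  simp only [map_add, map_smul, κ.p_d₃, κ.q_d₃, κ.p_h, κ.q_h, hf, smul_eq_mul, Prod.mk_eq_zero]
  exact ⟨by ring, by ring, trivial⟩

theorem exact_coneD₂_coneD₁ (hε : Function.Surjective κ.ε)
    (hreg : IsWeaklyRegular Q [F.d₁ u₁, F.d₁ u₂])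
    (hφ : ∀ v, κ.φ v ∈ Ideal.span {F.d₁ u₁, F.d₁ u₂} → F.d₁ v ∈ Ideal.span {F.d₁ u₁, F.d₁ u₂}) :
    Function.Exact κ.coneD₂ κ.coneD₁ := by
  rintro ⟨α, β, v⟩
  refine ⟨fun hzero => ?_, fun ⟨⟨w, γ⟩, hw⟩ => hw ▸ κ.coneD₁_coneD₂ w γ⟩
  rw [coneD₁_apply] at hzero
  obtain ⟨x, y, hxy⟩ := Ideal.mem_span_pair.1 <| hφ v <|
    Ideal.mem_span_pair.2 ⟨-α, -β, by linear_combination -hzero⟩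
  obtain ⟨w, hw⟩ := (F.exact_d₂_d₁ (v - x • u₁ - y • u₂)).1 (by
    simp only [map_sub, map_smul, smul_eq_mul]
    linear_combination -hxy)
  have hv : (v : F₁) = x • u₁ + (F.d₂ w + y • u₂) := by rw [hw]; abel
  have hφv : κ.φ v = F.d₁ u₁ * (κ.p w + y * κ.s) + F.d₁ u₂ * (κ.q w + y * κ.t) := by
    rw [hv, map_add, map_smul, κ.φ_u₁, smul_zero, zero_add, φ_d₂_add_smul_u₂]
  obtain ⟨z, hα, hβ⟩ := exists_eq_smul_of_smul_add_smul_eq_zero hreg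
    (x := α + (κ.p w + y * κ.s)) (y := β + (κ.q w + y * κ.t))
    (by simp only [smul_eq_mul]; linear_combination hzero - hφv)
  obtain ⟨f, rfl⟩ := hε z
  have hproj : κ.proj (F.d₂ w + y • u₂) = v := by
    rw [← κ.proj_coe v, hv, map_add _ (x • u₁), map_smul, proj_u₁, smul_zero, zero_add]
  refine ⟨(w + F.d₃ f, y), ?_⟩
  rw [coneD₂_apply, map_add F.d₂, F.d₂_d₃, add_zero, hproj, map_add, map_add, κ.p_d₃, κ.q_d₃]
  simp only [smul_eq_mul] at hα hβ
  exact Prod.ext (by linear_combination -hα) (Prod.ext (by linear_combination -hβ) rfl)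

theorem exact_coneD₃_coneD₂ (hreg : IsWeaklyRegular Q [F.d₁ u₁, F.d₁ u₂]) :
    Function.Exact κ.coneD₃ κ.coneD₂ := by
  obtain ⟨hreg₁, hreg₂⟩ := isWeaklyRegular_pair_iff.1 hreg
  rintro ⟨w, γ⟩
  refine ⟨fun hzero => ?_, fun ⟨⟨f, l⟩, hf⟩ => hf ▸ κ.coneD₂_coneD₃ f l⟩
  simp only [coneD₂_apply, Prod.mk_eq_zero, neg_eq_zero] at hzero
  obtain ⟨hp, hq, hproj⟩ := hzero
  set y := κ.o (F.d₂ w + γ • u₂)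
  have hy : F.d₂ w + γ • u₂ = y • u₁ := sub_eq_zero.1 (congrArg Subtype.val hproj)
  have hγy : F.d₁ u₂ * γ = F.d₁ u₁ * y := by
    simpa [mul_comm] using congrArg F.d₁ hy
  obtain ⟨l, rfl⟩ := hreg₂ γ y hγy
  have hyl : y = F.d₁ u₂ * l := hreg₁ (by
    simp only [smul_eq_mul] at hγy ⊢
    linear_combination -hγy)
  obtain ⟨f, hf⟩ := (F.exact_d₃_d₂ (w - l • κ.h)).1 (by
    rw [map_sub, map_smul, κ.d₂_h, eq_sub_of_add_eq hy, hyl, smul_eq_mul]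
    module)
  obtain rfl : w = F.d₃ f + l • κ.h := by rw [hf, sub_add_cancel]
  have hεf : κ.ε f = 0 := hreg₁ (by
    simp only [map_add, map_smul, κ.q_d₃, κ.q_h, smul_eq_mul] at hq ⊢
    linear_combination hq)
  exact ⟨(⟨f, hεf⟩, l), rfl⟩

theorem injective_coneD₃ (hreg : IsSMulRegular Q (F.d₁ u₁)) : Function.Injective κ.coneD₃ := by
  rw [injective_iff_map_eq_zero]
  rintro ⟨f, l⟩ hzero
  rw [coneD₃_apply, Prod.mk_eq_zero] at hzero
  obtain rfl : l = 0 := hreg (by simpa using hzero.2)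
  have hf : (f : F₃) = 0 := F.injective_d₃ (by simpa using hzero.1)
  exact Prod.ext (Subtype.ext hf) rfl

/-- The iterated mapping cone of `K → F → K` as a resolution of `Q ⧸ κ.ideal`. -/
def cone (hε : Function.Surjective κ.ε) (hreg : IsWeaklyRegular Q [F.d₁ u₁, F.d₁ u₂])
    (hφ : ∀ v, κ.φ v ∈ Ideal.span {F.d₁ u₁, F.d₁ u₂} → F.d₁ v ∈ Ideal.span {F.d₁ u₁, F.d₁ u₂}) :
    CyclicResolution Q (Q × Q × κ.o.ker) (F₂ × Q) (κ.ε.ker × Q) where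
  d₁ := κ.coneD₁
  d₂ := κ.coneD₂
  d₃ := κ.coneD₃
  exact_d₂_d₁ := κ.exact_coneD₂_coneD₁ hε hreg hφ
  exact_d₃_d₂ := κ.exact_coneD₃_coneD₂ hreg
  injective_d₃ := κ.injective_coneD₃ (isWeaklyRegular_pair_iff.1 hreg).1

theorem range_coneD₁ : κ.coneD₁.range = κ.ideal := by
  refine le_antisymm ?_ (sup_le ?_ ?_)
  · rintro - ⟨⟨α, β, v⟩, rfl⟩
    rw [coneD₁_apply]
    exact add_mem (Submodule.mem_sup_left (Ideal.mem_span_pair.2 ⟨α, β, by ring⟩))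
      (Submodule.mem_sup_right ⟨v, rfl⟩)
  · rw [Ideal.span_le, Set.pair_subset_iff]
    exact ⟨⟨(1, 0, 0), by simp [coneD₁_apply]⟩, ⟨(0, 1, 0), by simp [coneD₁_apply]⟩⟩
  · rintro - ⟨v, rfl⟩
    exact ⟨(0, 0, κ.proj v), by simp [coneD₁_apply, φ_proj]⟩

end ReducedKoszulMap

section Minimality

variable [IsLocalRing Q]

/-- A morphism to the Koszul complex whose components in degrees one and two vanish modulo the
maximal ideal. -/
structure KoszulMap.IsMinimal {a₁ a₂ : Q} (κ : KoszulMap F a₁ a₂) : Prop where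
  φ_mem (v : F₁) : κ.φ v ∈ maximalIdeal Q
  p_mem (w : F₂) : κ.p w ∈ maximalIdeal Q
  q_mem (w : F₂) : κ.q w ∈ maximalIdeal Q

theorem KoszulMap.IsMinimal.homotopic {a₁ a₂ : Q} {κ : KoszulMap F a₁ a₂} (hκ : κ.IsMinimal)
    (hF : F.IsMinimal) (ha₁ : a₁ ∈ maximalIdeal Q) (ha₂ : a₂ ∈ maximalIdeal Q)
    (σ τ : Module.Dual Q F₁) : (κ.homotopic σ τ).IsMinimal where
  φ_mem v := sub_mem (hκ.φ_mem v)
    (add_mem (Ideal.mul_mem_right _ _ ha₁) (Ideal.mul_mem_right _ _ ha₂))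
  p_mem w := sub_mem (hκ.p_mem w) (by simpa using map_mem_smul_top σ (hF.d₂_mem w))
  q_mem w := sub_mem (hκ.q_mem w) (by simpa using map_mem_smul_top τ (hF.d₂_mem w))

namespace ReducedKoszulMap

/-- All the data entering the differentials of the cone vanish modulo the maximal ideal. -/
structure IsMinimal (κ : ReducedKoszulMap F u₁ u₂) : Prop extends κ.toKoszulMap.IsMinimal where
  s_mem : κ.s ∈ maximalIdeal Q
  t_mem : κ.t ∈ maximalIdeal Q
  u₂_mem : u₂ ∈ maximalIdeal Q • (⊤ : Submodule Q F₁)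
  h_mem : κ.h ∈ maximalIdeal Q • (⊤ : Submodule Q F₂)

variable {κ : ReducedKoszulMap F u₁ u₂}

theorem coneD₁_mem (hF : F.IsMinimal) (hκ : κ.IsMinimal) (x : Q × Q × κ.o.ker) :
    κ.coneD₁ x ∈ maximalIdeal Q :=
  add_mem (Ideal.mul_mem_right _ _ (hF.d₁_mem u₁))
    (add_mem (Ideal.mul_mem_right _ _ (hF.d₁_mem u₂)) (hκ.φ_mem _))

theorem coneD₂_mem (hF : F.IsMinimal) (hκ : κ.IsMinimal) (x : F₂ × Q) :
    κ.coneD₂ x ∈ maximalIdeal Q • (⊤ : Submodule Q (Q × Q × κ.o.ker)) := by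
  refine prod_mk_mem_smul_top ?_ (prod_mk_mem_smul_top ?_ (map_mem_smul_top κ.proj ?_))
  · simpa using neg_mem (add_mem (hκ.p_mem x.1) (Ideal.mul_mem_left _ x.2 hκ.s_mem))
  · simpa using neg_mem (add_mem (hκ.q_mem x.1) (Ideal.mul_mem_left _ x.2 hκ.t_mem))
  · exact add_mem (hF.d₂_mem x.1) (Submodule.smul_mem _ x.2 hκ.u₂_mem)

theorem coneD₃_mem (hF : F.IsMinimal) (hκ : κ.IsMinimal) (x : κ.ε.ker × Q) :
    κ.coneD₃ x ∈ maximalIdeal Q • (⊤ : Submodule Q (F₂ × Q)) := by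
  refine prod_mk_mem_smul_top ?_ ?_
  · exact add_mem (hF.d₃_mem x.1) (Submodule.smul_mem _ x.2 hκ.h_mem)
  · simpa using Ideal.mul_mem_right x.2 _ (hF.d₁_mem u₁)

theorem hasResolutionFormat_ideal [Module.Finite Q F₁] [Module.Free Q F₁] [Module.Finite Q F₂]
    [Module.Free Q F₂] [Module.Finite Q F₃] [Module.Free Q F₃] (hF : F.IsMinimal)
    (hκ : κ.IsMinimal) (hε : Function.Surjective κ.ε)
    (hreg : IsWeaklyRegular Q [F.d₁ u₁, F.d₁ u₂])
    (hφ : ∀ v, κ.φ v ∈ Ideal.span {F.d₁ u₁, F.d₁ u₂} → F.d₁ v ∈ Ideal.span {F.d₁ u₁, F.d₁ u₂})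
    {m n : ℕ} (h₁ : Module.finrank Q F₁ = m) (h₂ : Module.finrank Q F₂ = m + n - 1)
    (h₃ : Module.finrank Q F₃ = n) : HasResolutionFormat κ.ideal (m + 1) n := by
  have ho : Function.Surjective κ.o := fun r => ⟨r • u₁, by simp [κ.o_u₁]⟩
  have := finite_ker_of_surjective ho
  have := free_ker_of_surjective ho
  have := finite_ker_of_surjective hε
  have := free_ker_of_surjective hε
  have hranko := finrank_ker_add_finrank_of_surjective ho
  have hrankε := finrank_ker_add_finrank_of_surjective hε
  rw [Module.finrank_self] at hranko hrankε
  have hcone : (κ.cone hε hreg hφ).IsMinimal :=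
    ⟨coneD₁_mem hF hκ, coneD₂_mem hF hκ, coneD₃_mem hF hκ⟩
  have := hcone.hasResolutionFormat (m := m + 1) (n := n)
    (by simp only [Module.finrank_prod, Module.finrank_self]; omega)
    (by simp only [Module.finrank_prod, Module.finrank_self]; omega)
    (by simp only [Module.finrank_prod, Module.finrank_self]; omega)
  rwa [← κ.range_coneD₁]

end ReducedKoszulMap

end Minimality

end Cone

section Construction

variable {Q F₁ F₂ F₃ : Type*} [CommRing Q] [AddCommGroup F₁] [Module Q F₁] [AddCommGroup F₂]
  [Module Q F₂] [AddCommGroup F₃] [Module Q F₃] {F : CyclicResolution Q F₁ F₂ F₃} {u₁ u₂ : F₁}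

namespace KoszulMap

theorem homotopic_φ_mem_iff {a₁ a₂ : Q} (κ : KoszulMap F a₁ a₂) (σ τ : Module.Dual Q F₁) (v : F₁) :
    (κ.homotopic σ τ).φ v ∈ Ideal.span {a₁, a₂} ↔ κ.φ v ∈ Ideal.span {a₁, a₂} :=
  sub_mem_comm_iff.trans <| Submodule.sub_mem_iff_right _ <|
    Ideal.mem_span_pair.2 ⟨σ v, τ v, by simp [mul_comm]⟩

variable (κ : KoszulMap F (F.d₁ u₁) (F.d₁ u₂))

theorem exists_p_q_add_d₃ (hε : Function.Surjective κ.ε)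
    (hreg : IsWeaklyRegular Q [F.d₁ u₁, F.d₁ u₂]) (hφ₁ : κ.φ u₁ = 0) {s t : Q}
    (hφ₂ : κ.φ u₂ = F.d₁ u₁ * s + F.d₁ u₂ * t) {h : F₂}
    (hh : F.d₂ h = F.d₁ u₂ • u₁ - F.d₁ u₁ • u₂) :
    ∃ f, κ.p (h + F.d₃ f) = -(F.d₁ u₁ * s) ∧ κ.q (h + F.d₃ f) = -(F.d₁ u₁ * t) := by
  have hφh := κ.φ_d₂ h
  simp only [hh, map_sub, map_smul, hφ₁, hφ₂, smul_eq_mul] at hφh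
  obtain ⟨z, hp, hq⟩ := exists_eq_smul_of_smul_add_smul_eq_zero hreg
    (x := κ.p h + F.d₁ u₁ * s) (y := κ.q h + F.d₁ u₁ * t)
    (by simp only [smul_eq_mul]; linear_combination -hφh)
  obtain ⟨f, rfl⟩ := hε z
  refine ⟨f, ?_, ?_⟩
  · rw [map_add, κ.p_d₃]
    linear_combination (norm := (simp only [smul_eq_mul]; ring)) hp
  · rw [map_add, κ.q_d₃]
    linear_combination (norm := (simp only [smul_eq_mul]; ring)) hq

theorem exists_reducedKoszulMap [IsLocalRing Q] (hF : F.IsMinimal) (hκ : κ.IsMinimal)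
    (hε : Function.Surjective κ.ε) (hreg : IsWeaklyRegular Q [F.d₁ u₁, F.d₁ u₂])
    {o : Module.Dual Q F₁} (ho : o u₁ = 1) (hφ₁ : κ.φ u₁ ∈ Ideal.span {F.d₁ u₁, F.d₁ u₂})
    {s t : Q} (hφ₂ : κ.φ u₂ = F.d₁ u₁ * s + F.d₁ u₂ * t) (hs : s ∈ maximalIdeal Q)
    (ht : t ∈ maximalIdeal Q) (hu₂ : u₂ ∈ maximalIdeal Q • (⊤ : Submodule Q F₁)) {h : F₂}
    (hd₂h : F.d₂ h = F.d₁ u₂ • u₁ - F.d₁ u₁ • u₂)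
    (hh : h ∈ maximalIdeal Q • (⊤ : Submodule Q F₂)) :
    ∃ κ' : ReducedKoszulMap F u₁ u₂, κ'.IsMinimal ∧
      ∃ σ τ, κ'.toKoszulMap = κ.homotopic σ τ := by
  obtain ⟨s₀, t₀, hφ₁⟩ := Ideal.mem_span_pair.1 hφ₁
  let κ₀ := κ.homotopic (s₀ • o) (t₀ • o)
  have hφ₀ (v : F₁) : κ₀.φ v = κ.φ v - (F.d₁ u₁ * (s₀ * o v) + F.d₁ u₂ * (t₀ * o v)) := rfl
  have hφ₀₁ : κ₀.φ u₁ = 0 := by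
    rw [hφ₀, ho]
    linear_combination -hφ₁
  have hφ₀₂ : κ₀.φ u₂ = F.d₁ u₁ * (s - s₀ * o u₂) + F.d₁ u₂ * (t - t₀ * o u₂) := by
    rw [hφ₀]
    linear_combination hφ₂
  have hou₂ : o u₂ ∈ maximalIdeal Q := by simpa using map_mem_smul_top o hu₂
  obtain ⟨f, hp, hq⟩ := κ₀.exists_p_q_add_d₃ hε hreg hφ₀₁ hφ₀₂ hd₂h
  let κ' : ReducedKoszulMap F u₁ u₂ :=
    { κ₀ with
      o, h := h + F.d₃ f, s := s - s₀ * o u₂, t := t - t₀ * o u₂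
      o_u₁ := ho, φ_u₁ := hφ₀₁, φ_u₂ := hφ₀₂, p_h := hp, q_h := hq
      d₂_h := by rw [map_add, F.d₂_d₃, add_zero, hd₂h] }
  have hκ₀ : κ₀.IsMinimal := hκ.homotopic hF (hF.d₁_mem u₁) (hF.d₁_mem u₂) _ _
  exact ⟨κ', { hκ₀ with
    s_mem := sub_mem hs (Ideal.mul_mem_left _ _ hou₂)
    t_mem := sub_mem ht (Ideal.mul_mem_left _ _ hou₂)
    u₂_mem := hu₂
    h_mem := add_mem hh (hF.d₃_mem f) }, _, _, rfl⟩

end KoszulMap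

namespace CyclicResolution.Multiplication

variable (μ : F.Multiplication) (ε : Module.Dual Q F₃) (u v : F₁) (c : Q)

/-- Multiplication by `u * v`, followed by `ε`, is a morphism from `F` to the Koszul complex of
`d₁ u, d₁ v`. This is its composite with the morphism to the Koszul complex of `d₁ u, (d₁ v)²`,
altered by the multiple `c • d₁` of the differential. The square is written `d₁ (d₁ v • v)` so that
it is visibly the image of an element of `F₁`. -/
def koszulMap : KoszulMap F (F.d₁ u) (F.d₁ (F.d₁ v • v)) where
  φ := F.d₁ v • ε ∘ₗ μ.mul₂ u ∘ₗ μ.mul₁ v + c • F.d₁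
  p := -(F.d₁ v • ε ∘ₗ μ.mul₂ v)
  q := ε ∘ₗ μ.mul₂ u
  ε := ε
  φ_d₂ w := by
    have hvw : μ.mul₁ v (F.d₂ w) = F.d₁ v • w - F.d₃ (μ.mul₂ v w) := by
      rw [μ.d₃_mul₂, sub_sub_cancel]
    simp only [LinearMap.add_apply, LinearMap.smul_apply, LinearMap.comp_apply,
      LinearMap.neg_apply, hvw, map_sub, map_smul, μ.mul₂_d₃, d₁_d₂, smul_eq_mul]
    ring
  p_d₃ f := by
    simp only [LinearMap.neg_apply, LinearMap.smul_apply, LinearMap.comp_apply, μ.mul₂_d₃,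
      map_smul, smul_eq_mul]
    ring
  q_d₃ f := by simp [μ.mul₂_d₃]

theorem koszulMap_φ_apply (x : F₁) : (μ.koszulMap ε u v c).φ x =
    F.d₁ v * ε (μ.mul₂ u (μ.mul₁ v x)) + c * F.d₁ x :=
  rfl

theorem exists_koszulMap_φ_smul_self : ∃ r, (μ.koszulMap ε u v c).φ (F.d₁ v • v) =
    F.d₁ u * (F.d₁ v * r) + F.d₁ (F.d₁ v • v) * c := by
  obtain ⟨g, hg⟩ := μ.exists_d₃_eq_mul₁_self v
  refine ⟨F.d₁ v * ε g, ?_⟩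
  simp only [koszulMap_φ_apply, map_smul, ← hg, μ.mul₂_d₃, smul_eq_mul]
  ring

variable {ε u v c}

theorem isMinimal_koszulMap [IsLocalRing Q] (hF : F.IsMinimal)
    (hu : ∀ w, ε (μ.mul₂ u w) ∈ maximalIdeal Q) : (μ.koszulMap ε u v c).IsMinimal where
  φ_mem x := add_mem (Ideal.mul_mem_right _ _ (hF.d₁_mem v)) (Ideal.mul_mem_left _ _ (hF.d₁_mem x))
  p_mem _ := neg_mem (Ideal.mul_mem_right _ _ (hF.d₁_mem v))
  q_mem := hu

theorem exists_reducedKoszulMap [IsLocalRing Q] (hF : F.IsMinimal) (hε : Function.Surjective ε)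
    (hu : ∀ w, ε (μ.mul₂ u w) ∈ maximalIdeal Q) {o : Module.Dual Q F₁} (ho : o u = 1)
    (hc : c ∈ maximalIdeal Q) {z : F₁} (hreg : IsRegular Q [F.d₁ u, F.d₁ (F.d₁ v • v), F.d₁ z]) :
    ∃ κ : ReducedKoszulMap F u (F.d₁ v • v), κ.IsMinimal ∧
      ∃ σ τ, κ.toKoszulMap = (μ.koszulMap ε u v c).homotopic σ τ := by
  obtain ⟨r, hr⟩ := μ.exists_koszulMap_φ_smul_self ε u v c
  refine (μ.koszulMap ε u v c).exists_reducedKoszulMap hF (μ.isMinimal_koszulMap hF hu) hε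
    (isWeaklyRegular_triple_iff.1 hreg.toIsWeaklyRegular).1 ho
    ((μ.koszulMap ε u v c).φ_mem_of_d₁_mem (mem_span_pair_of_mul_mem hreg)
      (Ideal.subset_span (by simp)))
    hr (Ideal.mul_mem_right _ _ (hF.d₁_mem v)) hc
    (Submodule.smul_mem_smul (hF.d₁_mem v) trivial) (h := F.d₁ v • μ.mul₁ v u) ?_
    (Submodule.smul_mem_smul (hF.d₁_mem v) trivial)
  simp only [map_smul, μ.d₂_mul₁, smul_eq_mul]
  module

variable [IsNoetherianRing Q] [IsLocalRing Q]

theorem exists_isRegular_forall_dual_mul₂_mem [Module.Finite Q F₁] [Module.Free Q F₁]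
    [Module.Finite Q F₂] [Module.Free Q F₂] [Module.Finite Q F₃] [Module.Free Q F₃]
    (hF : F.IsMinimal)
    (hrank : Module.finrank Q F₁ + Module.finrank Q F₃ = Module.finrank Q F₂ + 1)
    (hrank₃ : 2 ≤ Module.finrank Q F₃) (hε : Function.Surjective ε) {x v z : F₁}
    (hreg : IsRegular Q [F.d₁ x, F.d₁ v, F.d₁ z]) :
    ∃ (u : F₁) (o : Module.Dual Q F₁), o u = 1 ∧ (∀ w, ε (μ.mul₂ u w) ∈ maximalIdeal Q) ∧
      IsRegular Q [F.d₁ u, F.d₁ v, F.d₁ z] := by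
  obtain ⟨u, o, hou, hu⟩ := μ.exists_forall_dual_mul₂_mem hF hrank hrank₃
    (isWeaklyRegular_triple_iff.1 hreg.toIsWeaklyRegular).1 hε
  have hperm (y : Q) : [F.d₁ v, F.d₁ z, y].Perm [y, F.d₁ v, F.d₁ z] :=
    List.perm_append_comm (l₁ := [F.d₁ v, F.d₁ z]) (l₂ := [y])
  obtain ⟨e, he, hureg⟩ := exists_isRegular_append_add_mul (rs := [F.d₁ v, F.d₁ z])
    (isRegular_of_perm hreg (hperm _).symm) (hF.d₁_mem u)
  have hunit : IsUnit (o (u + e • x)) := by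
    rw [map_add, hou, map_smul, smul_eq_mul]
    simpa using isUnit_one_sub_self_of_mem_nonunits (-(e * o x))
      ((mem_maximalIdeal _).1 (neg_mem (Ideal.mul_mem_right _ _ he)))
  obtain ⟨r, hr⟩ := hunit.exists_left_inv
  refine ⟨u + e • x, r • o, hr, fun w => ?_, ?_⟩
  · rw [map_add, LinearMap.add_apply, map_add, map_smul, LinearMap.smul_apply, map_smul]
    exact add_mem (hu w) (Ideal.mul_mem_right _ _ he)
  · rw [map_add, map_smul, smul_eq_mul]
    exact isRegular_of_perm hureg (hperm _)

theorem exists_isRegular_koszulMap_φ (hF : F.IsMinimal) {z : F₁}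
    (hreg : IsRegular Q [F.d₁ u, F.d₁ v, F.d₁ z]) :
    IsRegular Q [F.d₁ u, F.d₁ (F.d₁ v • v), F.d₁ z] ∧ ∃ c ∈ maximalIdeal Q,
      IsRegular Q [F.d₁ u, F.d₁ (F.d₁ v • v), (μ.koszulMap ε u v c).φ z] := by
  have hsq : IsRegular Q [F.d₁ u, F.d₁ (F.d₁ v • v), F.d₁ z] := by
    have hswap (b : Q) : [F.d₁ u, b, F.d₁ z].Perm [F.d₁ u, F.d₁ z, b] :=
      .cons _ (.swap _ _ _)
    rw [map_smul, smul_eq_mul, ← sq]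
    exact isRegular_of_perm (isRegular_append_sq (rs := [F.d₁ u, F.d₁ z])
      (isRegular_of_perm hreg (hswap _))) (hswap _).symm
  exact ⟨hsq, exists_isRegular_append_add_mul (rs := [F.d₁ u, F.d₁ (F.d₁ v • v)]) hsq
    (Ideal.mul_mem_right (ε (μ.mul₂ u (μ.mul₁ v z))) _ (hF.d₁_mem v))⟩

end CyclicResolution.Multiplication

theorem CyclicResolution.IsMinimal.exists_linked [IsNoetherianRing Q] [IsLocalRing Q]
    [Module.Finite Q F₁] [Module.Free Q F₁] [Module.Finite Q F₂] [Module.Free Q F₂]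
    [Module.Finite Q F₃] [Module.Free Q F₃] (hF : F.IsMinimal) {m n : ℕ} (hn : 2 ≤ n)
    (h₁ : Module.finrank Q F₁ = m) (h₂ : Module.finrank Q F₂ = m + n - 1)
    (h₃ : Module.finrank Q F₃ = n) {x v z : F₁} (hreg : IsRegular Q [F.d₁ x, F.d₁ v, F.d₁ z]) :
    ∃ J : Ideal Q, (∃ a b c : Q, a ∈ J ∧ b ∈ J ∧ c ∈ J ∧ IsRegular Q [a, b, c]) ∧
      HasResolutionFormat J (m + 1) n ∧ Linked F.d₁.range J := by
  obtain ⟨μ⟩ := F.nonempty_multiplication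
  obtain ⟨ε, hε⟩ : ∃ ε : Module.Dual Q F₃, Function.Surjective ε := by
    have : Nontrivial F₃ := Module.nontrivial_of_finrank_pos (R := Q) (by omega)
    obtain ⟨f, hf⟩ := exists_ne (0 : F₃)
    obtain ⟨ε, hε, -⟩ := exists_dual_surjective_of_not_surjective (f := (0 : F₃ →ₗ[Q] F₃))
      fun h => hf (h f).choose_spec.symm
    exact ⟨ε, hε⟩
  obtain ⟨u, o, hou, hu, hreg⟩ :=
    μ.exists_isRegular_forall_dual_mul₂_mem hF (by omega) (by omega) hε hreg
  obtain ⟨hreg, c, hc, hregφ⟩ := μ.exists_isRegular_koszulMap_φ (ε := ε) hF hreg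
  obtain ⟨κ, hκ, σ, τ, hστ⟩ := μ.exists_reducedKoszulMap hF hε hu hou hc hreg
  have hεκ : Function.Surjective κ.ε := hστ ▸ hε
  have hformat : HasResolutionFormat κ.ideal (m + 1) n := by
    refine κ.hasResolutionFormat_ideal hF hκ hεκ
      (isWeaklyRegular_triple_iff.1 hreg.toIsWeaklyRegular).1 (fun w hw => ?_) h₁ h₂ h₃
    rw [hστ, KoszulMap.homotopic_φ_mem_iff] at hw
    exact (μ.koszulMap ε u v c).d₁_mem_of_φ_mem (mem_span_pair_of_mul_mem hregφ) hw
  rw [hστ, KoszulMap.ideal_homotopic] at hformat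
  exact ⟨(μ.koszulMap ε u v c).ideal,
    ⟨_, _, _, Submodule.mem_sup_left (Ideal.subset_span (by simp)),
      Submodule.mem_sup_left (Ideal.subset_span (by simp)),
      Submodule.mem_sup_right (LinearMap.mem_range_self _ z), hregφ⟩,
    hformat, (μ.koszulMap ε u v c).linked ⟨u, rfl⟩ ⟨_, rfl⟩ hreg hregφ⟩

end Construction

/-- **Corollary 1.3(c).** Let `Q` be a commutative Noetherian local ring and `I ⊆ Q` a
grade `3` perfect ideal of resolution format `(1, m, m+n-1, n)`.  If `m ≥ 4` and
`n ≥ 2`, then there exists a grade `3` perfect ideal of resolution format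
`(1, m+1, m+n, n)` that is linked to `I`. -/
theorem stmt_6 (Q : Type*) [CommRing Q] [IsNoetherianRing Q] [IsLocalRing Q]
    (I : Ideal Q) (m n : ℕ) (hI : IsGrade3PerfectOfFormat I m n)
    (hm : 4 ≤ m) (hn : 2 ≤ n) :
    ∃ J : Ideal Q, IsGrade3PerfectOfFormat J (m + 1) n ∧ Linked I J := by
  obtain ⟨⟨x, y, z, hx, hy, hz, hreg⟩, -, hn₁, hformat⟩ := hI
  obtain ⟨F, hF, rfl⟩ := hformat.exists_cyclicResolution
  obtain ⟨x, rfl⟩ := hx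
  obtain ⟨y, rfl⟩ := hy
  obtain ⟨z, rfl⟩ := hz
  obtain ⟨J, hJreg, hJformat, hlinked⟩ :=
    hF.exists_linked (m := m) hn (by simp) (by simp) (by simp) hreg
  exact ⟨J, ⟨hJreg, by omega, hn₁, hJformat⟩, hlinked⟩
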